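/- arXiv:2001.00303 — 5 statements merged into one kernel-verified Lean document; each statement's English description precedes it below -/
import Mathlib

section
/- For every m ≥ 1 and all real m×m matrices A and B, the characteristic polynomial of the 2m×2m block matrix with block rows [A, −A] and [B, −B] (i.e. Matrix.fromBlocks A (−A) B (−B)) equals X^m times the characteristic polynomial of A − B. -/
open Polynomial

section BlockCharpoly

open Matrix

variable {m n R : Type*} [Fintype m] [DecidableEq m] [Fintype n] [DecidableEq n] [CommRing R]

theorem charpoly_fromBlocks_mul (A : Matrix m n R) (B : Matrix n n R)
    (C : Matrix n m R) (D : Matrix n n R) :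
    (fromBlocks (A * C) (A * D) (B * C) (B * D)).charpoly =
      X ^ Fintype.card m * (C * A + D * B).charpoly := by
  have card_le : Fintype.card n ≤ Fintype.card (m ⊕ n) := by
    rw [Fintype.card_sum]
    exact Nat.le_add_left _ _
  calc
    (fromBlocks (A * C) (A * D) (B * C) (B * D)).charpoly
      = (fromRows A B * fromCols C D).charpoly := by rw [fromRows_mul_fromCols]
    _ = X ^ (Fintype.card (m ⊕ n) - Fintype.card n) * (fromCols C D * fromRows A B).charpoly :=
      charpoly_mul_comm_of_le _ _ card_le
    _ = X ^ Fintype.card m * (C * A + D * B).charpoly := by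
      rw [Fintype.card_sum, Nat.add_sub_cancel, fromCols_mul_fromRows]

theorem statement9_general (A B : Matrix n n R) :
    (fromBlocks A (-A) B (-B)).charpoly = X ^ Fintype.card n * (A - B).charpoly := by
  simpa only [Matrix.mul_one, Matrix.one_mul, Matrix.mul_neg, Matrix.neg_mul, ← sub_eq_add_neg]
    using charpoly_fromBlocks_mul A B 1 (-1)

end BlockCharpoly

/-- For all real `m × m` matrices `A`, `B`, the characteristic
polynomial of the block matrix `[[A, -A], [B, -B]]` equals `X^m` times the
characteristic polynomial of `A - B`. -/
theorem statement9 (m : ℕ) (hm : 1 ≤ m) (A B : Matrix (Fin m) (Fin m) ℝ) :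
    (Matrix.fromBlocks A (-A) B (-B)).charpoly = X ^ m * (A - B).charpoly := by
  simpa only [Fintype.card_fin] using statement9_general A B
end

section
/- There is a universal constant c ≥ 1 such that: for every δ ∈ (0,1), every integer Δ ≥ 3, every simple graph G on [n] with n ≥ 2 and maximum degree at most Δ, setting λ = (1−δ)·λ_c(Δ), the hardcore distribution μ = μ_{G,λ} satisfies ∑_{u ≠ v} |Ψ_μ(u,v)| ≤ exp(c/δ) for every vertex v ∈ [n]. -/
/-!
Deleting vertices one at a time turns the hardcore model into a recursion on finite regions: the
influence of `v` on `u` is a combination of the influences on `u` of the neighbours `t` of `v`, each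
in a smaller region and with weight the occupation probability `p t` there, as in Weitz's tree of
self-avoiding walks. Only the root can have more than `d = Δ - 1` children. By Cauchy–Schwarz, the
total influence multiplied by `√p` contracts along this recursion when `p v * (d * ∑ t, p t) < 1`,
and this follows from `λ ≤ (1 - δ) λ_c(Δ)` and an extremal inequality for `λ_c`, an instance of the
inequality of arithmetic and geometric means. This bounds the influence of one vertex on all the
others. Since `p u * (1 - p u) * Ψ u v` is symmetric in `u` and `v`, and `p u * (1 - p u)` is
comparable to `λ` up to a constant factor because `Δ λ` is bounded, the influence of all vertices
on one vertex is bounded as well.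
-/

open scoped Classical
open Finset

noncomputable section

namespace PaperStmt

variable {n : ℕ}

/-- Probability of an event under `μ`. -/
def prE (μ : Finset (Fin n) → ℝ) (E : Finset (Fin n) → Prop) : ℝ :=
  ∑ S : Finset (Fin n), if E S then μ S else 0

/-- Conditional probability `Pr[E | F]` under `μ`. -/
def condPrE (μ : Finset (Fin n) → ℝ) (E F : Finset (Fin n) → Prop) : ℝ :=
  prE μ (fun S => E S ∧ F S) / prE μ F

/-- The pairwise influence matrix `Ψ_μ`. -/
def psi (μ : Finset (Fin n) → ℝ) : Matrix (Fin n) (Fin n) ℝ :=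
  fun i j => if i = j then 0 else
    condPrE μ (fun S => j ∈ S) (fun S => i ∈ S)
      - condPrE μ (fun S => j ∈ S) (fun S => i ∉ S)

/-- `S` is an independent set of `G`. -/
def IsIndepSet (G : SimpleGraph (Fin n)) (S : Finset (Fin n)) : Prop :=
  ∀ i ∈ S, ∀ j ∈ S, ¬ G.Adj i j

/-- The hardcore partition function `Z_G(λ)`. -/
def hardcoreZ (G : SimpleGraph (Fin n)) (lam : ℝ) : ℝ :=
  ∑ S : Finset (Fin n), if IsIndepSet G S then lam ^ S.card else 0

/-- The hardcore distribution `μ_{G,λ}`. -/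
def hardcore (G : SimpleGraph (Fin n)) (lam : ℝ) : Finset (Fin n) → ℝ :=
  fun S => if IsIndepSet G S then lam ^ S.card / hardcoreZ G lam else 0

/-- The uniqueness threshold `λ_c(Δ) = (Δ-1)^(Δ-1) / (Δ-2)^Δ`. -/
def lamC (Δ : ℕ) : ℝ := ((Δ : ℝ) - 1) ^ (Δ - 1) / ((Δ : ℝ) - 2) ^ Δ

section HardcoreRegions

variable {V : Type*}

/-- The neighbours of `v` inside the finite region `W`. -/
def nbrsIn (G : SimpleGraph V) (W : Finset V) (v : V) : Finset V := {w ∈ W | G.Adj v w}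

/-- The total hardcore weight of the independent subsets of the finite region `W` that satisfy the
event `E`. -/
def eventWeight (G : SimpleGraph V) (lam : ℝ) (W : Finset V) (E : Finset V → Prop) : ℝ :=
  ∑ S ∈ W.powerset with E S ∧ G.IsIndepSet S, lam ^ #S

/-- The hardcore partition function of the subgraph of `G` induced by `W`. -/
def partitionFn (G : SimpleGraph V) (lam : ℝ) (W : Finset V) : ℝ :=
  eventWeight G lam W fun _ => True

/-- The probability of `E` under the hardcore distribution of the subgraph induced by `W`. -/
def eventProb (G : SimpleGraph V) (lam : ℝ) (W : Finset V) (E : Finset V → Prop) : ℝ :=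
  eventWeight G lam W E / partitionFn G lam W

/-- The probability that `v` is occupied under the hardcore distribution of the subgraph induced
by `W`. -/
def occ (G : SimpleGraph V) (lam : ℝ) (W : Finset V) (v : V) : ℝ :=
  eventProb G lam W (v ∈ ·)

variable {G : SimpleGraph V} {lam : ℝ} {U W : Finset V} {u v w : V} {E F : Finset V → Prop}

lemma mem_nbrsIn : w ∈ nbrsIn G W v ↔ w ∈ W ∧ G.Adj v w := by
  simp only [nbrsIn, mem_filter]

lemma nbrsIn_subset_nbrsIn (h : U ⊆ W) (v : V) : nbrsIn G U v ⊆ nbrsIn G W v :=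
  filter_subset_filter _ h

lemma eventWeight_congr (h : ∀ S ⊆ W, E S ↔ F S) :
    eventWeight G lam W E = eventWeight G lam W F :=
  sum_congr (filter_congr fun S hS => and_congr_left fun _ => h S (mem_powerset.1 hS))
    fun _ _ => rfl

lemma eventProb_congr (h : ∀ S ⊆ W, E S ↔ F S) : eventProb G lam W E = eventProb G lam W F := by
  rw [eventProb, eventProb, eventWeight_congr h]

lemma eventWeight_eq_zero (h : ∀ S ⊆ W, ¬ E S) : eventWeight G lam W E = 0 := by
  rw [eventWeight, filter_eq_empty_iff.2 fun S hS hE => h S (mem_powerset.1 hS) hE.1, sum_empty]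

lemma eventProb_eq_zero (h : ∀ S ⊆ W, ¬ E S) : eventProb G lam W E = 0 := by
  rw [eventProb, eventWeight_eq_zero h, zero_div]

lemma partitionFn_pos (hl : 0 < lam) (W : Finset V) : 0 < partitionFn G lam W := by
  refine sum_pos (fun _ _ => pow_pos hl _) ⟨∅, ?_⟩
  simp [SimpleGraph.IsIndepSet]

lemma eventWeight_mono (hl : 0 ≤ lam) (h : U ⊆ W) (E : Finset V → Prop) :
    eventWeight G lam U E ≤ eventWeight G lam W E :=
  sum_le_sum_of_subset_of_nonneg (filter_subset_filter _ (powerset_mono.2 h))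
    fun _ _ _ => pow_nonneg hl _

lemma partitionFn_mono (hl : 0 ≤ lam) (h : U ⊆ W) : partitionFn G lam U ≤ partitionFn G lam W :=
  eventWeight_mono hl h _

lemma eventProb_true (hl : 0 < lam) (W : Finset V) : eventProb G lam W (fun _ => True) = 1 :=
  div_self (partitionFn_pos hl W).ne'

section Deletion

variable [DecidableEq V]

lemma nbrsIn_subset_erase (G : SimpleGraph V) (W : Finset V) (v : V) :
    nbrsIn G W v ⊆ W.erase v := fun _ hw =>
  mem_erase.2 ⟨(mem_nbrsIn.1 hw).2.ne', (mem_nbrsIn.1 hw).1⟩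

lemma card_nbrsIn_le_of_adj {d : ℕ} (hv : v ∈ W) (huv : G.Adj u v) (hd : #(nbrsIn G W u) ≤ d + 1)
    (hU : U ⊆ W.erase v) : #(nbrsIn G U u) ≤ d := by
  have hsub : nbrsIn G U u ⊆ (nbrsIn G W u).erase v := fun w hw => by
    have hw' := mem_nbrsIn.1 hw
    exact mem_erase.2 ⟨ne_of_mem_erase (hU hw'.1),
      mem_nbrsIn.2 ⟨mem_of_mem_erase (hU hw'.1), hw'.2⟩⟩
  have hcard := card_le_card hsub
  rw [card_erase_of_mem (mem_nbrsIn.2 ⟨hv, huv⟩)] at hcard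
  omega

lemma card_nbrsIn_le_of_subset_erase {d : ℕ} (hdeg : ∀ w ∈ W, #(nbrsIn G W w) ≤ d + 1)
    (hv : v ∈ W) (hu : u ∈ nbrsIn G W v) (hU : U ⊆ W.erase v) :
    (∀ w ∈ U, #(nbrsIn G U w) ≤ d + 1) ∧ #(nbrsIn G U u) ≤ d := by
  have hUW : U ⊆ W := hU.trans (erase_subset v W)
  obtain ⟨huW, hvu⟩ := mem_nbrsIn.1 hu
  exact ⟨fun w hw => (card_le_card (nbrsIn_subset_nbrsIn hUW w)).trans (hdeg w (hUW hw)),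
    card_nbrsIn_le_of_adj hv hvu.symm (hdeg u huW) hU⟩

lemma isIndepSet_insert_iff {S : Finset V} (hS : S ⊆ W.erase v) :
    G.IsIndepSet (insert v S : Finset V) ↔
      S ⊆ W.erase v \ nbrsIn G W v ∧ G.IsIndepSet (S : Set V) := by
  have hv : v ∉ (S : Set V) := fun h => notMem_erase v W (hS h)
  have hadj : S ⊆ W.erase v \ nbrsIn G W v ↔ ∀ w ∈ S, ¬ G.Adj v w := by
    rw [subset_sdiff, and_iff_right hS, Finset.disjoint_left]
    exact forall₂_congr fun w hw =>
      not_congr (mem_nbrsIn.trans (and_iff_right (mem_of_mem_erase (hS hw))))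
  have hsymm : ∀ w, G.Adj w v ↔ G.Adj v w := fun w => G.adj_comm w v
  rw [hadj, and_comm, coe_insert, SimpleGraph.IsIndepSet, Set.pairwise_insert_of_notMem hv]
  simp only [hsymm, and_self, mem_coe]

/-- Deletion–contraction: an independent set either avoids `v`, or arises by adding `v` to an
independent set that avoids `v` and its neighbours. -/
lemma eventWeight_eq_add (hv : v ∈ W) (E : Finset V → Prop) :
    eventWeight G lam W E = eventWeight G lam (W.erase v) E +
      lam * eventWeight G lam (W.erase v \ nbrsIn G W v) (fun S => E (insert v S)) := by
  have hnot : v ∉ W.erase v := notMem_erase v W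
  simp only [eventWeight, sum_filter]
  rw [← insert_erase hv, sum_powerset_insert hnot, insert_erase hv, mul_sum]
  congr 1
  symm
  refine sum_subset_zero_on_sdiff (powerset_mono.2 sdiff_subset) (fun S hS => ?_) fun S hS => ?_
  · obtain ⟨hS, hS'⟩ := mem_sdiff.1 hS
    rw [mem_powerset] at hS hS'
    rw [if_neg fun h => hS' ((isIndepSet_insert_iff hS).1 h.2).1]
  · have hsub := mem_powerset.1 hS
    have hS' := hsub.trans sdiff_subset
    rw [mul_ite, mul_zero, card_insert_of_notMem fun h => hnot (hS' h), pow_succ']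
    simp only [isIndepSet_insert_iff hS', hsub, true_and]

lemma partitionFn_eq_add (hv : v ∈ W) :
    partitionFn G lam W =
      partitionFn G lam (W.erase v) + lam * partitionFn G lam (W.erase v \ nbrsIn G W v) :=
  eventWeight_eq_add hv _

lemma occ_eq_div (hv : v ∈ W) :
    occ G lam W v =
      lam * partitionFn G lam (W.erase v \ nbrsIn G W v) / partitionFn G lam W := by
  have hvacant : eventWeight G lam (W.erase v) (v ∈ ·) = 0 :=
    eventWeight_eq_zero fun S hS h => notMem_erase v W (hS h)
  rw [occ, eventProb, eventWeight_eq_add hv, hvacant, zero_add]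
  simp only [mem_insert_self, partitionFn]

lemma one_sub_occ_eq_div (hl : 0 < lam) (hv : v ∈ W) :
    1 - occ G lam W v = partitionFn G lam (W.erase v) / partitionFn G lam W := by
  rw [occ_eq_div hv, one_sub_div (partitionFn_pos hl W).ne', partitionFn_eq_add hv,
    add_sub_cancel_right]

end Deletion

lemma occ_pos (hl : 0 < lam) (hv : v ∈ W) : 0 < occ G lam W v := by
  rw [occ_eq_div hv]
  exact div_pos (mul_pos hl (partitionFn_pos hl _)) (partitionFn_pos hl _)

lemma one_sub_occ_pos (hl : 0 < lam) (hv : v ∈ W) : 0 < 1 - occ G lam W v := by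
  rw [one_sub_occ_eq_div hl hv]
  exact div_pos (partitionFn_pos hl _) (partitionFn_pos hl _)

lemma occ_le_mul_one_sub_occ (hl : 0 < lam) (hv : v ∈ W) :
    occ G lam W v ≤ lam * (1 - occ G lam W v) := by
  rw [one_sub_occ_eq_div hl hv, occ_eq_div hv, mul_div_assoc]
  have := partitionFn_pos (G := G) hl W
  gcongr
  exact partitionFn_mono hl.le sdiff_subset

lemma occ_le (hl : 0 < lam) (hv : v ∈ W) : occ G lam W v ≤ lam :=
  (occ_le_mul_one_sub_occ hl hv).trans
    (mul_le_of_le_one_right hl.le (sub_le_self 1 (occ_pos hl hv).le))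

lemma one_le_one_add_mul_one_sub_occ (hl : 0 < lam) (hv : v ∈ W) :
    1 ≤ (1 + lam) * (1 - occ G lam W v) := by
  linarith [occ_le_mul_one_sub_occ (G := G) hl hv]

section Influence

variable [DecidableEq V]

/-- The influence of `v` on `u` in the subgraph induced by `W`. Conditioning on `v` being
occupied (resp. vacant) is encoded by passing to the region without `v` and its neighbours
(resp. without `v`); in particular the influence of `v` on itself is `1`. -/
def influence (G : SimpleGraph V) (lam : ℝ) (W : Finset V) (v u : V) : ℝ :=
  eventProb G lam (W.erase v \ nbrsIn G W v) (u ∈ insert v ·) - occ G lam (W.erase v) u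

/-- The total influence of `v` on the region `W`, including its influence on itself. -/
def totalInfluence (G : SimpleGraph V) (lam : ℝ) (W : Finset V) (v : V) : ℝ :=
  ∑ u ∈ W, |influence G lam W v u|

/-- The spatial Markov property: given the state of `v`, the rest of the configuration is a
hardcore configuration on a smaller region. -/
lemma eventProb_eq_add (hl : 0 < lam) (hv : v ∈ W) (E : Finset V → Prop) :
    eventProb G lam W E =
      occ G lam W v * eventProb G lam (W.erase v \ nbrsIn G W v) (fun S => E (insert v S)) +
        (1 - occ G lam W v) * eventProb G lam (W.erase v) E := by
  have h₀ := (partitionFn_pos (G := G) hl (W.erase v)).ne'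
  have h₁ := (partitionFn_pos (G := G) hl (W.erase v \ nbrsIn G W v)).ne'
  rw [one_sub_occ_eq_div hl hv, occ_eq_div hv, eventProb, eventWeight_eq_add hv, eventProb,
    eventProb]
  field_simp
  ring

lemma eventProb_and_mem (hl : 0 < lam) (hv : v ∈ W) (E : Finset V → Prop) :
    eventProb G lam W (fun S => E S ∧ v ∈ S) =
      occ G lam W v * eventProb G lam (W.erase v \ nbrsIn G W v) (fun S => E (insert v S)) := by
  have hvacant : eventProb G lam (W.erase v) (fun S => E S ∧ v ∈ S) = 0 :=
    eventProb_eq_zero fun S hS h => notMem_erase v W (hS h.2)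
  rw [eventProb_eq_add hl hv, hvacant, mul_zero, add_zero]
  simp only [mem_insert_self, and_true]

lemma eventProb_and_notMem (hl : 0 < lam) (hv : v ∈ W) (E : Finset V → Prop) :
    eventProb G lam W (fun S => E S ∧ v ∉ S) =
      (1 - occ G lam W v) * eventProb G lam (W.erase v) E := by
  rw [eventProb_eq_add hl hv, eventProb_eq_zero fun S _ h => h.2 (mem_insert_self v S), mul_zero,
    zero_add, eventProb_congr fun S hS => and_iff_left fun h => notMem_erase v W (hS h)]

lemma occ_erase_sub_occ (hl : 0 < lam) (hv : v ∈ W) (u : V) :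
    occ G lam (W.erase v) u - occ G lam W u = -(occ G lam W v * influence G lam W v u) := by
  have hmarkov := eventProb_eq_add (G := G) hl hv (u ∈ ·)
  simp only [influence, occ] at hmarkov ⊢
  linear_combination -hmarkov

lemma influence_self (hl : 0 < lam) (W : Finset V) (v : V) : influence G lam W v v = 1 := by
  have hvacant : occ G lam (W.erase v) v = 0 :=
    eventProb_eq_zero fun S hS h => notMem_erase v W (hS h)
  simp only [influence, hvacant, sub_zero, mem_insert_self, eventProb_true hl]

lemma influence_of_ne (huv : u ≠ v) :
    influence G lam W v u =
      occ G lam (W.erase v \ nbrsIn G W v) u - occ G lam (W.erase v) u := by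
  simp only [influence, occ, mem_insert, huv, false_or]

lemma influence_of_notMem (hv : v ∈ W) (hu : u ∉ W) : influence G lam W v u = 0 := by
  have hocc : ∀ U ⊆ W, occ G lam U u = 0 := fun U hU =>
    eventProb_eq_zero fun S hS h => hu (hU (hS h))
  rw [influence_of_ne (ne_of_mem_of_not_mem hv hu).symm, hocc _ (erase_subset v W),
    hocc _ (sdiff_subset.trans (erase_subset v W)), sub_zero]

lemma sum_abs_influence_eq_totalInfluence (hU : U ⊆ W) (hv : v ∈ U) :
    ∑ u ∈ W, |influence G lam U v u| = totalInfluence G lam U v :=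
  (sum_subset hU fun u _ hu => by rw [influence_of_notMem hv hu, abs_zero]).symm

/-- Removing `T` from `W` one vertex at a time passes through regions `U t`, from which `t` is the
next vertex to be removed. -/
lemma exists_sub_eq_sum_erase_sub {M : Type*} [AddCommGroup M] {T : Finset V} (hT : T ⊆ W) :
    ∃ U : V → Finset V, (∀ t ∈ T, t ∈ U t ∧ U t ⊆ W) ∧
      ∀ F : Finset V → M, F (W \ T) - F W = ∑ t ∈ T, (F ((U t).erase t) - F (U t)) := by
  induction T using Finset.induction_on with
  | empty => exact ⟨fun _ => ∅, by simp, by simp⟩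
  | insert a T ha ih =>
    obtain ⟨U, hU, hF⟩ := ih ((subset_insert a T).trans hT)
    have haW : a ∈ W \ T := mem_sdiff.2 ⟨hT (mem_insert_self a T), ha⟩
    have hold : ∀ t ∈ T, Function.update U a (W \ T) t = U t := fun t ht =>
      Function.update_of_ne (ne_of_mem_of_not_mem ht ha) _ _
    refine ⟨Function.update U a (W \ T), fun t ht => ?_, fun F => ?_⟩
    · rcases mem_insert.1 ht with rfl | ht
      · rw [Function.update_self]
        exact ⟨haW, sdiff_subset⟩
      · rw [hold t ht]
        exact hU t ht
    · rw [sum_insert ha, sum_congr rfl fun t ht => by rw [hold t ht], ← hF F,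
        Function.update_self, sdiff_insert]
      abel

lemma exists_partitionFn_sdiff_and_occ_sdiff (hl : 0 < lam) {T : Finset V} (hT : T ⊆ W) :
    ∃ U : V → Finset V, (∀ t ∈ T, t ∈ U t ∧ U t ⊆ W) ∧
      partitionFn G lam (W \ T) = partitionFn G lam W * ∏ t ∈ T, (1 - occ G lam (U t) t) ∧
      ∀ u, occ G lam (W \ T) u - occ G lam W u =
        -∑ t ∈ T, occ G lam (U t) t * influence G lam (U t) t u := by
  obtain ⟨U, hU, hF⟩ := exists_sub_eq_sum_erase_sub (M := ℝ) hT
  have hZ : ∀ W, 0 < partitionFn G lam W := partitionFn_pos hl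
  refine ⟨U, hU, ?_, fun u => ?_⟩
  · have hlog : Real.log (partitionFn G lam (W \ T)) - Real.log (partitionFn G lam W) =
        ∑ t ∈ T, Real.log (1 - occ G lam (U t) t) := by
      refine (hF fun W => Real.log (partitionFn G lam W)).trans (sum_congr rfl fun t ht => ?_)
      rw [one_sub_occ_eq_div hl (hU t ht).1, Real.log_div (hZ _).ne' (hZ _).ne']
    rw [← Real.exp_log (hZ (W \ T)), sub_eq_iff_eq_add'.1 hlog, Real.exp_add,
      Real.exp_log (hZ W), Real.exp_sum]
    exact congrArg _ (prod_congr rfl fun t ht => Real.exp_log (one_sub_occ_pos hl (hU t ht).1))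
  · rw [hF fun W => occ G lam W u, ← sum_neg_distrib]
    exact sum_congr rfl fun t ht => occ_erase_sub_occ hl (hU t ht).1 u

/-- The neighbours `t` of `v`, each in its own region `U t`, play the role of the children of `v`
in Weitz's tree of self-avoiding walks. -/
lemma exists_tree_recursion (hl : 0 < lam) (hv : v ∈ W) :
    ∃ U : V → Finset V, (∀ t ∈ nbrsIn G W v, t ∈ U t ∧ U t ⊆ W.erase v) ∧
      occ G lam W v =
        (1 - occ G lam W v) * (lam * ∏ t ∈ nbrsIn G W v, (1 - occ G lam (U t) t)) ∧
      totalInfluence G lam W v ≤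
        1 + ∑ t ∈ nbrsIn G W v, occ G lam (U t) t * totalInfluence G lam (U t) t := by
  obtain ⟨U, hU, hZ, hocc⟩ :=
    exists_partitionFn_sdiff_and_occ_sdiff (G := G) hl (nbrsIn_subset_erase G W v)
  refine ⟨U, hU, ?_, ?_⟩
  · rw [one_sub_occ_eq_div hl hv, occ_eq_div hv, hZ]
    ring
  have hle : ∀ u, |influence G lam W v u| ≤ (if u = v then 1 else 0) +
      ∑ t ∈ nbrsIn G W v, occ G lam (U t) t * |influence G lam (U t) t u| := by
    intro u
    have hpos : ∀ t ∈ nbrsIn G W v, 0 < occ G lam (U t) t := fun t ht => occ_pos hl (hU t ht).1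
    by_cases huv : u = v
    · rw [huv, influence_self hl, abs_one, if_pos rfl]
      exact le_add_of_nonneg_right
        (sum_nonneg fun t ht => mul_nonneg (hpos t ht).le (abs_nonneg _))
    · rw [influence_of_ne huv, hocc u, if_neg huv, zero_add, abs_neg]
      refine (abs_sum_le_sum_abs _ _).trans_eq (sum_congr rfl fun t ht => ?_)
      rw [abs_mul, abs_of_pos (hpos t ht)]
  calc totalInfluence G lam W v
      ≤ ∑ u ∈ W, ((if u = v then 1 else 0) +
          ∑ t ∈ nbrsIn G W v, occ G lam (U t) t * |influence G lam (U t) t u|) :=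
        sum_le_sum fun u _ => hle u
    _ = 1 + ∑ t ∈ nbrsIn G W v, occ G lam (U t) t * ∑ u ∈ W, |influence G lam (U t) t u| := by
        rw [sum_add_distrib, sum_ite_eq', if_pos hv, sum_comm]
        simp only [mul_sum]
    _ = _ := by
        refine congrArg _ (sum_congr rfl fun t ht => ?_)
        rw [sum_abs_influence_eq_totalInfluence
          ((hU t ht).2.trans (erase_subset v W)) (hU t ht).1]

end Influence

lemma le_pow_mul_occ_mul_one_sub_occ (hl : 0 < lam) (hv : v ∈ W) {D : ℕ}
    (hD : #(nbrsIn G W v) ≤ D) :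
    lam ≤ (1 + lam) ^ (D + 2) * (occ G lam W v * (1 - occ G lam W v)) := by
  obtain ⟨U, hU, hocc, -⟩ := exists_tree_recursion (G := G) hl hv
  set P := ∏ t ∈ nbrsIn G W v, (1 - occ G lam (U t) t)
  have hP0 : 0 ≤ P := prod_nonneg fun t ht => (one_sub_occ_pos hl (hU t ht).1).le
  have hprod : 1 ≤ (1 + lam) ^ D * P := by
    calc 1 ≤ ∏ t ∈ nbrsIn G W v, ((1 + lam) * (1 - occ G lam (U t) t)) := by
          simpa only [prod_const_one] using prod_le_prod (fun _ _ => zero_le_one) fun t ht =>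
            one_le_one_add_mul_one_sub_occ hl (hU t ht).1
      _ = (1 + lam) ^ #(nbrsIn G W v) * P := by rw [prod_mul_distrib, prod_const]
      _ ≤ (1 + lam) ^ D * P := by
          gcongr
          linarith
  have hvacant := one_le_one_add_mul_one_sub_occ (G := G) hl hv
  calc lam ≤ lam * (((1 + lam) * (1 - occ G lam W v)) ^ 2 * ((1 + lam) ^ D * P)) :=
        le_mul_of_one_le_right hl.le (one_le_mul_of_one_le_of_one_le (one_le_pow₀ hvacant) hprod)
    _ = (1 + lam) ^ (D + 2) *
          (((1 - occ G lam W v) * (lam * P)) * (1 - occ G lam W v)) := by ring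
    _ = _ := by rw [← hocc]

end HardcoreRegions


section Threshold

variable {d : ℕ} {ι : Type*} {s : Finset ι} {p : ι → ℝ} {q lam δ : ℝ}

lemma natCast_sub_one_pos (hd : 2 ≤ d) : 0 < (d : ℝ) - 1 := by
  have : (2 : ℝ) ≤ d := by exact_mod_cast hd
  linarith

lemma lamC_succ (d : ℕ) : lamC (d + 1) = ((d : ℝ) / (d - 1)) ^ d / (d - 1) := by
  have hshift : (d : ℝ) + 1 - 2 = d - 1 := by ring
  rw [lamC, Nat.add_sub_cancel, Nat.cast_add_one, add_sub_cancel_right, hshift, pow_succ,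
    ← div_div, ← div_pow]

lemma lamC_pos {Δ : ℕ} (hΔ : 3 ≤ Δ) : 0 < lamC Δ := by
  have hΔ' : (3 : ℝ) ≤ Δ := by exact_mod_cast hΔ
  exact div_pos (pow_pos (by linarith) _) (pow_pos (by linarith) _)

lemma add_three_mul_lamC_succ_le (hd : 2 ≤ d) : ((d : ℝ) + 3) * lamC (d + 1) ≤ 45 := by
  have hd' := natCast_sub_one_pos hd
  have hd₂ : (2 : ℝ) ≤ d := by exact_mod_cast hd
  have hratio : (d : ℝ) / (d - 1) = 1 / (d - 1) + 1 := by
    field_simp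
    ring
  have hexp : Real.exp 2 ≤ 9 := by
    rw [show (2 : ℝ) = 1 + 1 by norm_num, Real.exp_add]
    nlinarith [Real.exp_one_lt_d9, Real.exp_pos 1]
  have hpow : ((d : ℝ) / (d - 1)) ^ d ≤ 9 := by
    calc ((d : ℝ) / (d - 1)) ^ d ≤ Real.exp (1 / (d - 1)) ^ d := by
          rw [hratio]
          gcongr
          exact Real.add_one_le_exp _
      _ = Real.exp (d / (d - 1)) := by rw [← Real.exp_nat_mul, mul_one_div]
      _ ≤ Real.exp 2 := Real.exp_le_exp.2 (by rw [div_le_iff₀ hd']; linarith)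
      _ ≤ 9 := hexp
  rw [lamC_succ, mul_div_assoc', div_le_iff₀ hd']
  nlinarith

lemma add_three_mul_le_of_le_mul_lamC (hd : 2 ≤ d) (hδ : 0 ≤ δ)
    (hlam : lam ≤ (1 - δ) * lamC (d + 1)) : ((d : ℝ) + 3) * lam ≤ 45 := by
  have hle : lam ≤ lamC (d + 1) :=
    hlam.trans (mul_le_of_le_one_left (lamC_pos (Nat.succ_le_succ hd)).le (sub_le_self 1 hδ))
  exact le_trans (by gcongr) (add_three_mul_lamC_succ_le hd)

/-- The extremal property of the uniqueness threshold, with equality when `p` is constantly `1 / d`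
on `d` points. It is the inequality of arithmetic and geometric means for the at most `d` numbers
`d / (d - 1) * (1 - p i)`, padded by `d / (d - 1)`, and `(d * ∑ p - 1) / (d - 1)`, whose sum
is `d + 1`. -/
lemma lamC_mul_prod_mul_le_one (hd : 2 ≤ d) (hs : #s ≤ d) (hp : ∀ i ∈ s, p i ≤ 1) :
    lamC (d + 1) * (∏ i ∈ s, (1 - p i)) * (d * ∑ i ∈ s, p i - 1) ≤ 1 := by
  have hd' := natCast_sub_one_pos hd
  set a : ℝ := d / (d - 1) with ha
  set w : ℝ := (d * ∑ i ∈ s, p i - 1) / (d - 1) with hw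
  set A : ℝ := (∏ i ∈ s, a * (1 - p i)) * a ^ (d - #s) with hA
  have ha0 : 0 ≤ a := div_nonneg d.cast_nonneg hd'.le
  have hfactor : ∀ i ∈ s, 0 ≤ a * (1 - p i) := fun i hi =>
    mul_nonneg ha0 (sub_nonneg.2 (hp i hi))
  have hA0 : 0 ≤ A := mul_nonneg (prod_nonneg hfactor) (pow_nonneg ha0 _)
  have hle_exp : ∀ y : ℝ, y ≤ Real.exp (y - 1) := fun y => by
    linarith [Real.add_one_le_exp (y - 1)]
  have hAle : A ≤ Real.exp (1 - w) := by
    calc A ≤ (∏ i ∈ s, Real.exp (a * (1 - p i) - 1)) * Real.exp (a - 1) ^ (d - #s) :=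
          mul_le_mul (prod_le_prod hfactor fun i _ => hle_exp _)
            (pow_le_pow_left₀ ha0 (hle_exp a) _) (pow_nonneg ha0 _)
            (prod_nonneg fun _ _ => (Real.exp_pos _).le)
      _ = Real.exp (1 - w) := by
          rw [← Real.exp_sum, ← Real.exp_nat_mul, ← Real.exp_add, Nat.cast_sub hs,
            sum_sub_distrib, ← mul_sum, sum_sub_distrib, sum_const, nsmul_eq_mul, mul_one, hw, ha]
          congr 1
          field_simp
          ring
  calc lamC (d + 1) * (∏ i ∈ s, (1 - p i)) * (d * ∑ i ∈ s, p i - 1) = A * w := by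
        rw [lamC_succ, hA, prod_mul_distrib, prod_const, mul_right_comm (a ^ #s), ← pow_add,
          Nat.add_sub_cancel' hs, hw]
        ring
    _ ≤ Real.exp (1 - w) * Real.exp (w - 1) :=
        (mul_le_mul_of_nonneg_left (hle_exp w) hA0).trans
          (mul_le_mul_of_nonneg_right hAle (Real.exp_pos _).le)
    _ = 1 := by rw [← Real.exp_add, sub_add_sub_cancel, sub_self, Real.exp_zero]

lemma mul_sq_sum_sqrt_le (hd : 2 ≤ d) (hδ : δ ≤ 1) (hlam : lam ≤ (1 - δ) * lamC (d + 1))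
    (hs : #s ≤ d) (hp₀ : ∀ i ∈ s, 0 ≤ p i) (hp₁ : ∀ i ∈ s, p i ≤ 1) (hq₀ : 0 ≤ q) (hq₁ : q ≤ 1)
    (hq : q = (1 - q) * (lam * ∏ i ∈ s, (1 - p i))) :
    q * (∑ i ∈ s, √(p i)) ^ 2 ≤ 1 - δ * (1 - q) := by
  have hP : 0 ≤ ∑ i ∈ s, p i := sum_nonneg hp₀
  have hprod : 0 ≤ ∏ i ∈ s, (1 - p i) := prod_nonneg fun i hi => sub_nonneg.2 (hp₁ i hi)
  have hcauchy : (∑ i ∈ s, √(p i)) ^ 2 ≤ d * ∑ i ∈ s, p i := by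
    refine sq_sum_le_card_mul_sum_sq.trans ?_
    rw [sum_congr rfl fun i hi => Real.sq_sqrt (hp₀ i hi)]
    gcongr
  have hexcess : q * (d * ∑ i ∈ s, p i - 1) ≤ (1 - q) * (1 - δ) := by
    rcases le_total (d * ∑ i ∈ s, p i) 1 with h | h
    · exact (mul_nonpos_of_nonneg_of_nonpos hq₀ (sub_nonpos.2 h)).trans
        (mul_nonneg (sub_nonneg.2 hq₁) (sub_nonneg.2 hδ))
    · calc q * (d * ∑ i ∈ s, p i - 1)
          = (1 - q) * (lam * (∏ i ∈ s, (1 - p i)) * (d * ∑ i ∈ s, p i - 1)) := by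
            rw [← mul_assoc, ← hq]
        _ ≤ (1 - q) * ((1 - δ) * lamC (d + 1) * (∏ i ∈ s, (1 - p i)) *
              (d * ∑ i ∈ s, p i - 1)) := by
            have := sub_nonneg.2 hq₁
            have := sub_nonneg.2 h
            gcongr
        _ ≤ (1 - q) * (1 - δ) := by
            refine mul_le_mul_of_nonneg_left ?_ (sub_nonneg.2 hq₁)
            rw [mul_assoc, mul_assoc, ← mul_assoc (lamC _)]
            exact mul_le_of_le_one_right (sub_nonneg.2 hδ) (lamC_mul_prod_mul_le_one hd hs hp₁)
  calc q * (∑ i ∈ s, √(p i)) ^ 2 ≤ q * (d * ∑ i ∈ s, p i) := by gcongr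
    _ ≤ 1 - δ * (1 - q) := by linarith

lemma mul_le_sqrt_mul {T K : ℝ} (hq : 0 ≤ q) (h : √q * T ≤ K) : q * T ≤ √q * K := by
  calc q * T = √q * (√q * T) := by rw [← mul_assoc, Real.mul_self_sqrt hq]
    _ ≤ √q * K := mul_le_mul_of_nonneg_left h (Real.sqrt_nonneg q)

lemma sqrt_mul_sum_sqrt_le (hd : 2 ≤ d) (hδ₀ : 0 ≤ δ) (hδ₁ : δ ≤ 1) (hl : 0 ≤ lam)
    (hlam : lam ≤ (1 - δ) * lamC (d + 1)) (hs : #s ≤ d) (hp₀ : ∀ i ∈ s, 0 ≤ p i)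
    (hp₁ : ∀ i ∈ s, p i ≤ 1) (hq₀ : 0 ≤ q) (hq₁ : 1 ≤ (1 + lam) * (1 - q))
    (hq : q = (1 - q) * (lam * ∏ i ∈ s, (1 - p i))) :
    √q * ∑ i ∈ s, √(p i) ≤ 1 - δ / (2 * (1 + lam)) := by
  have hvacant : 1 / (1 + lam) ≤ 1 - q := by rw [div_le_iff₀' (by positivity)]; exact hq₁
  have hhalf : δ / (2 * (1 + lam)) = δ * (1 / (1 + lam)) / 2 := by field_simp
  have hloss : δ * (1 / (1 + lam)) ≤ 1 :=
    mul_le_one₀ hδ₁ (by positivity) (div_le_one_of_le₀ (by linarith) (by positivity))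
  rw [hhalf]
  refine le_of_sq_le_sq ?_ (by linarith)
  calc (√q * ∑ i ∈ s, √(p i)) ^ 2 = q * (∑ i ∈ s, √(p i)) ^ 2 := by
        rw [mul_pow, Real.sq_sqrt hq₀]
    _ ≤ 1 - δ * (1 - q) :=
        mul_sq_sum_sqrt_le hd hδ₁ hlam hs hp₀ hp₁ hq₀
          (by linarith [one_div_nonneg.2 (add_nonneg zero_le_one hl)]) hq
    _ ≤ 1 - δ * (1 / (1 + lam)) := by gcongr
    _ ≤ (1 - δ * (1 / (1 + lam)) / 2) ^ 2 := by
        linarith [sq_nonneg (δ * (1 / (1 + lam)) / 2)]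

end Threshold

section TreeInduction

variable {V : Type*} [DecidableEq V] {G : SimpleGraph V} {lam δ : ℝ} {d : ℕ} {W : Finset V} {v : V}

/-- The function `√(occ v) * totalInfluence v` is the potential that contracts along the tree
recursion. -/
lemma sqrt_occ_mul_totalInfluence_le (hd : 2 ≤ d) (hδ₀ : 0 < δ) (hδ₁ : δ ≤ 1) (hl : 0 < lam)
    (hlam : lam ≤ (1 - δ) * lamC (d + 1)) (hdeg : ∀ w ∈ W, #(nbrsIn G W w) ≤ d + 1) (hv : v ∈ W)
    (hvd : #(nbrsIn G W v) ≤ d) :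
    √(occ G lam W v) * totalInfluence G lam W v ≤ 2 * (1 + lam) * √lam / δ := by
  set K := 2 * (1 + lam) * √lam / δ with hK
  induction W using Finset.strongInduction generalizing v with
  | H W ih =>
  obtain ⟨U, hU, hocc, hT⟩ := exists_tree_recursion (G := G) hl hv
  have hchild : ∀ t ∈ nbrsIn G W v,
      occ G lam (U t) t * totalInfluence G lam (U t) t ≤ √(occ G lam (U t) t) * K := by
    intro t ht
    obtain ⟨htU, hUW⟩ := hU t ht
    obtain ⟨hdegU, htd⟩ := card_nbrsIn_le_of_subset_erase hdeg hv ht hUW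
    exact mul_le_sqrt_mul (occ_pos hl htU).le
      (ih (U t) (hUW.trans_ssubset (erase_ssubset hv)) hdegU htU htd)
  have hcontract : √(occ G lam W v) * ∑ t ∈ nbrsIn G W v, √(occ G lam (U t) t) ≤
      1 - δ / (2 * (1 + lam)) :=
    sqrt_mul_sum_sqrt_le hd hδ₀.le hδ₁ hl.le hlam hvd
      (fun t ht => (occ_pos hl (hU t ht).1).le)
      (fun t ht => (sub_pos.1 (one_sub_occ_pos hl (hU t ht).1)).le)
      (occ_pos hl hv).le (one_le_one_add_mul_one_sub_occ hl hv) hocc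
  calc √(occ G lam W v) * totalInfluence G lam W v
      ≤ √(occ G lam W v) *
          (1 + ∑ t ∈ nbrsIn G W v, √(occ G lam (U t) t) * K) := by
        gcongr
        exact hT.trans (add_le_add_right (sum_le_sum hchild) 1)
    _ = √(occ G lam W v) +
          (√(occ G lam W v) * ∑ t ∈ nbrsIn G W v, √(occ G lam (U t) t)) * K := by
        rw [← sum_mul]
        ring
    _ ≤ √lam + (1 - δ / (2 * (1 + lam))) * K := by
        gcongr
        exact occ_le hl hv
    _ = K := by
        rw [hK]
        field_simp
        ring

lemma totalInfluence_le (hd : 2 ≤ d) (hδ₀ : 0 < δ) (hδ₁ : δ ≤ 1) (hl : 0 < lam)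
    (hlam : lam ≤ (1 - δ) * lamC (d + 1)) (hdeg : ∀ w ∈ W, #(nbrsIn G W w) ≤ d + 1)
    (hv : v ∈ W) :
    totalInfluence G lam W v ≤ 1 + 2 * (1 + lam) * (((d : ℝ) + 1) * lam) / δ := by
  obtain ⟨U, hU, -, hT⟩ := exists_tree_recursion (G := G) hl hv
  have hchild : ∀ t ∈ nbrsIn G W v, occ G lam (U t) t * totalInfluence G lam (U t) t ≤
      √lam * (2 * (1 + lam) * √lam / δ) := by
    intro t ht
    obtain ⟨htU, hUW⟩ := hU t ht
    obtain ⟨hdegU, htd⟩ := card_nbrsIn_le_of_subset_erase hdeg hv ht hUW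
    refine (mul_le_sqrt_mul (occ_pos hl htU).le
      (sqrt_occ_mul_totalInfluence_le hd hδ₀ hδ₁ hl hlam hdegU htU htd)).trans ?_
    gcongr
    exact occ_le hl htU
  calc totalInfluence G lam W v
      ≤ 1 + ∑ t ∈ nbrsIn G W v, √lam * (2 * (1 + lam) * √lam / δ) :=
        hT.trans (add_le_add_right (sum_le_sum hchild) 1)
    _ ≤ 1 + ((d : ℝ) + 1) * (√lam * (2 * (1 + lam) * √lam / δ)) := by
        rw [sum_const, nsmul_eq_mul]
        gcongr
        exact_mod_cast hdeg v hv
    _ = 1 + 2 * (1 + lam) * (((d : ℝ) + 1) * lam) / δ := by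
        linear_combination 2 * (1 + lam) * ((d : ℝ) + 1) / δ * Real.mul_self_sqrt hl.le

lemma totalInfluence_le_div (hd : 2 ≤ d) (hδ₀ : 0 < δ) (hδ₁ : δ ≤ 1) (hl : 0 < lam)
    (hlam : lam ≤ (1 - δ) * lamC (d + 1)) (hdeg : ∀ w ∈ W, #(nbrsIn G W w) ≤ d + 1)
    (hv : v ∈ W) :
    totalInfluence G lam W v ≤ 901 / δ := by
  have hd₂ : (2 : ℝ) ≤ d := by exact_mod_cast hd
  have hlC := add_three_mul_le_of_le_mul_lamC hd hδ₀.le hlam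
  calc totalInfluence G lam W v ≤ 1 + 2 * (1 + lam) * (((d : ℝ) + 1) * lam) / δ :=
        totalInfluence_le hd hδ₀ hδ₁ hl hlam hdeg hv
    _ ≤ 1 / δ + 2 * (1 + 9) * 45 / δ := by
        gcongr
        · exact (one_le_div hδ₀).2 hδ₁
        · nlinarith
        · linarith
    _ = 901 / δ := by ring

end TreeInduction

section Reversibility

variable {μ : Finset (Fin n) → ℝ} {i j : Fin n}

lemma prE_add_prE_not (μ : Finset (Fin n) → ℝ) (E F : Finset (Fin n) → Prop) :
    prE μ (fun S => E S ∧ F S) + prE μ (fun S => E S ∧ ¬ F S) = prE μ E := by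
  rw [prE, prE, prE, ← sum_add_distrib]
  refine sum_congr rfl fun S _ => ?_
  by_cases hE : E S <;> by_cases hF : F S <;> simp [hE, hF]

lemma prE_not (hμ : prE μ (fun _ => True) = 1) (E : Finset (Fin n) → Prop) :
    prE μ (fun S => ¬ E S) = 1 - prE μ E := by
  simpa only [true_and, hμ, eq_sub_iff_add_eq'] using prE_add_prE_not μ (fun _ => True) E

lemma mul_one_sub_mul_psi (hμ : prE μ (fun _ => True) = 1) (hi₀ : prE μ (i ∈ ·) ≠ 0)
    (hi₁ : prE μ (i ∈ ·) ≠ 1) (hij : i ≠ j) :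
    prE μ (i ∈ ·) * (1 - prE μ (i ∈ ·)) * psi μ i j =
      prE μ (fun S => j ∈ S ∧ i ∈ S) - prE μ (i ∈ ·) * prE μ (j ∈ ·) := by
  have hvacant : 1 - prE μ (i ∈ ·) ≠ 0 := sub_ne_zero.2 hi₁.symm
  have hsplit := prE_add_prE_not μ (j ∈ ·) (i ∈ ·)
  rw [psi, if_neg hij, condPrE, condPrE, prE_not hμ]
  field_simp
  linear_combination -prE μ (i ∈ ·) * hsplit

/-- Both sides are the covariance of the events `i ∈ S` and `j ∈ S`. -/
lemma mul_one_sub_mul_psi_comm (hμ : prE μ (fun _ => True) = 1)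
    (h₀ : ∀ k, prE μ (k ∈ ·) ≠ 0) (h₁ : ∀ k, prE μ (k ∈ ·) ≠ 1) (hij : i ≠ j) :
    prE μ (i ∈ ·) * (1 - prE μ (i ∈ ·)) * psi μ i j =
      prE μ (j ∈ ·) * (1 - prE μ (j ∈ ·)) * psi μ j i := by
  rw [mul_one_sub_mul_psi hμ (h₀ i) (h₁ i) hij, mul_one_sub_mul_psi hμ (h₀ j) (h₁ j) hij.symm,
    mul_comm (prE μ (j ∈ ·))]
  simp only [and_comm]

end Reversibility

section Hardcore

variable {G : SimpleGraph (Fin n)} {lam : ℝ} {u v : Fin n}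

lemma isIndepSet_iff {S : Finset (Fin n)} : IsIndepSet G S ↔ G.IsIndepSet (S : Set (Fin n)) :=
  ⟨fun h _ hi _ hj _ => h _ hi _ hj, fun h _ hi _ hj hij => h hi hj hij.ne hij⟩

lemma hardcoreZ_eq_partitionFn (G : SimpleGraph (Fin n)) (lam : ℝ) :
    hardcoreZ G lam = partitionFn G lam univ := by
  simp only [hardcoreZ, partitionFn, eventWeight, sum_filter, powerset_univ, isIndepSet_iff,
    true_and]

lemma prE_hardcore (G : SimpleGraph (Fin n)) (lam : ℝ) (E : Finset (Fin n) → Prop) :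
    prE (hardcore G lam) E = eventProb G lam univ E := by
  rw [prE, eventProb, eventWeight, powerset_univ, sum_filter, sum_div]
  refine sum_congr rfl fun S _ => ?_
  simp only [hardcore, isIndepSet_iff, hardcoreZ_eq_partitionFn, ite_and, ite_div, zero_div]

lemma prE_hardcore_true (G : SimpleGraph (Fin n)) (hl : 0 < lam) :
    prE (hardcore G lam) (fun _ => True) = 1 := by
  rw [prE_hardcore, eventProb_true hl]

lemma prE_hardcore_mem (G : SimpleGraph (Fin n)) (lam : ℝ) (v : Fin n) :
    prE (hardcore G lam) (v ∈ ·) = occ G lam univ v :=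
  prE_hardcore G lam _

lemma psi_hardcore (hl : 0 < lam) (huv : u ≠ v) :
    psi (hardcore G lam) v u = influence G lam univ v u := by
  have hv := mem_univ v
  rw [psi, if_neg huv.symm, condPrE, condPrE, prE_not (prE_hardcore_true G hl), prE_hardcore_mem,
    prE_hardcore, prE_hardcore, eventProb_and_mem hl hv, eventProb_and_notMem hl hv,
    mul_div_cancel_left₀ _ (occ_pos hl hv).ne', mul_div_cancel_left₀ _ (one_sub_occ_pos hl hv).ne',
    influence, occ]

lemma coe_nbrsIn_univ (G : SimpleGraph (Fin n)) (v : Fin n) :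
    (nbrsIn G univ v : Set (Fin n)) = G.neighborSet v := by
  ext w
  simp only [mem_coe, mem_nbrsIn, mem_univ, true_and, SimpleGraph.mem_neighborSet]

lemma abs_psi_hardcore_le (hl : 0 < lam) {D : ℕ} (hu : #(nbrsIn G univ u) ≤ D) (huv : u ≠ v) :
    |psi (hardcore G lam) u v| ≤ (1 + lam) ^ (D + 2) * |psi (hardcore G lam) v u| := by
  have hpos : ∀ k, 0 < occ G lam univ k := fun k => occ_pos hl (mem_univ k)
  have hlt : ∀ k, 0 < 1 - occ G lam univ k := fun k => one_sub_occ_pos hl (mem_univ k)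
  have hvar : ∀ k, 0 < occ G lam univ k * (1 - occ G lam univ k) := fun k =>
    mul_pos (hpos k) (hlt k)
  have hsymm := mul_one_sub_mul_psi_comm (prE_hardcore_true G hl)
    (fun k => (prE_hardcore_mem G lam k).trans_ne (hpos k).ne')
    (fun k => (prE_hardcore_mem G lam k).trans_ne (sub_pos.1 (hlt k)).ne) huv
  simp only [prE_hardcore_mem] at hsymm
  have hvar_le : occ G lam univ v * (1 - occ G lam univ v) ≤ lam :=
    (mul_le_of_le_one_right (hpos v).le (sub_le_self 1 (hpos v).le)).trans
      (occ_le hl (mem_univ v))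
  refine le_of_mul_le_mul_left ?_ (hvar u)
  calc occ G lam univ u * (1 - occ G lam univ u) * |psi (hardcore G lam) u v|
      = occ G lam univ v * (1 - occ G lam univ v) * |psi (hardcore G lam) v u| := by
        rw [← abs_of_pos (hvar u), ← abs_mul, hsymm, abs_mul, abs_of_pos (hvar v)]
    _ ≤ (1 + lam) ^ (D + 2) * (occ G lam univ u * (1 - occ G lam univ u)) *
          |psi (hardcore G lam) v u| := by
        refine mul_le_mul_of_nonneg_right ?_ (abs_nonneg _)
        exact hvar_le.trans (le_pow_mul_occ_mul_one_sub_occ hl (mem_univ u) hu)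
    _ = _ := by ring

lemma sum_abs_psi_hardcore_le (hl : 0 < lam) {D : ℕ} (hdeg : ∀ u, #(nbrsIn G univ u) ≤ D)
    (v : Fin n) :
    ∑ u ∈ univ.erase v, |psi (hardcore G lam) u v| ≤
      (1 + lam) ^ (D + 2) * totalInfluence G lam univ v := by
  calc ∑ u ∈ univ.erase v, |psi (hardcore G lam) u v|
      ≤ ∑ u ∈ univ.erase v, (1 + lam) ^ (D + 2) * |influence G lam univ v u| := by
        refine sum_le_sum fun u hu => ?_
        rw [← psi_hardcore hl (ne_of_mem_erase hu)]
        exact abs_psi_hardcore_le hl (hdeg u) (ne_of_mem_erase hu)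
    _ ≤ (1 + lam) ^ (D + 2) * totalInfluence G lam univ v := by
        rw [← mul_sum]
        gcongr
        exact sum_le_sum_of_subset_of_nonneg (erase_subset v univ) fun _ _ _ => abs_nonneg _

end Hardcore

theorem statement11_general :
    ∃ c : ℝ, 1 ≤ c ∧ ∀ δ : ℝ, 0 < δ → ∀ Δ : ℕ, 3 ≤ Δ →
      ∀ lam : ℝ, 0 < lam → lam ≤ (1 - δ) * lamC Δ → ∀ (n : ℕ) (G : SimpleGraph (Fin n)),
      (∀ v : Fin n, (G.neighborSet v).ncard ≤ Δ) →
      ∀ v : Fin n, ∑ u ∈ univ.erase v, |psi (hardcore G lam) u v| ≤ c / δ := by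
  refine ⟨Real.exp 45 * 901, by linarith [Real.one_le_exp (show (0 : ℝ) ≤ 45 by norm_num)], ?_⟩
  intro δ hδ Δ hΔ lam hl hlam n G hG v
  obtain ⟨d, rfl⟩ : ∃ d, Δ = d + 1 := ⟨Δ - 1, by omega⟩
  have hd : 2 ≤ d := by omega
  have hdeg : ∀ u, #(nbrsIn G univ u) ≤ d + 1 := fun u => by
    rw [← Set.ncard_coe_finset, coe_nbrsIn_univ]
    exact hG u
  have hδ₁ : δ < 1 := sub_pos.1 (pos_of_mul_pos_left (hl.trans_le hlam) (lamC_pos hΔ).le)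
  have hpow : (1 + lam) ^ (d + 1 + 2) ≤ Real.exp 45 := by
    calc (1 + lam) ^ (d + 1 + 2) ≤ Real.exp lam ^ (d + 1 + 2) := by
          gcongr
          linarith [Real.add_one_le_exp lam]
      _ ≤ Real.exp 45 := by
          rw [← Real.exp_nat_mul, Real.exp_le_exp]
          push_cast
          linarith [add_three_mul_le_of_le_mul_lamC hd hδ.le hlam]
  calc ∑ u ∈ univ.erase v, |psi (hardcore G lam) u v|
      ≤ (1 + lam) ^ (d + 1 + 2) * totalInfluence G lam univ v := sum_abs_psi_hardcore_le hl hdeg v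
    _ ≤ (1 + lam) ^ (d + 1 + 2) * (901 / δ) := by
        gcongr
        exact totalInfluence_le_div hd hδ hδ₁.le hl hlam (fun w _ => hdeg w) (mem_univ v)
    _ ≤ Real.exp 45 * (901 / δ) := by gcongr
    _ = Real.exp 45 * 901 / δ := by ring

/-- There is a universal constant `c ≥ 1` such that for the
hardcore distribution at `λ = (1-δ)·λ_c(Δ)` on any graph of maximum degree at
most `Δ`, the total influence on any vertex is at most `exp (c/δ)`. -/
theorem statement11 :
    ∃ c : ℝ, 1 ≤ c ∧
      ∀ δ : ℝ, 0 < δ → δ < 1 → ∀ (Δ : ℕ), 3 ≤ Δ →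
      ∀ (n : ℕ), 2 ≤ n → ∀ G : SimpleGraph (Fin n),
      (∀ v : Fin n, (G.neighborSet v).ncard ≤ Δ) →
      ∀ v : Fin n,
        ∑ u ∈ Finset.univ.erase v, |psi (hardcore G ((1 - δ) * lamC Δ)) u v|
          ≤ Real.exp (c / δ) := by
  obtain ⟨c, hc, h⟩ := statement11_general
  exact ⟨c, hc, fun δ hδ hδ₁ Δ hΔ n _ G hG v =>
    (h δ hδ Δ hΔ _ (mul_pos (sub_pos.2 hδ₁) (lamC_pos hΔ)) le_rfl n G hG v).trans
      ((lt_add_one _).le.trans (Real.add_one_le_exp _))⟩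

end PaperStmt
end
end

section
/- Let Δ ≥ 2 and 1 ≤ m ≤ Δ be integers, λ > 0, and 0 < η ≤ 1/2. Let Rmin, Rmax : Fin m → ℝ satisfy 0 ≤ Rmin(u) ≤ Rmax(u) ≤ Rmin(u) + η for every u. Then ∑_{u ∈ Fin m} sup{ G_u(R) : R : Fin m → ℝ with Rmin(w) ≤ R(w) ≤ Rmax(w) for all w } ≤ (1+2η)^{Δ+1} · ∑_{u ∈ Fin m} G_u(Rmax). -/
/-!
With `p x = x / (1 + x)`, the probability attached to the odds `x`, one has
`G_u R = √(p (R u) * p (F R))`. Moving `R` up to the corner `Rmax` increases `p (R u)` and changes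
each `1 + R w` by a factor of at most `1 + η`, so `F R ≤ (1 + η) ^ m * F Rmax`. As `p` is increasing
and `p (c * x) ≤ c * p x` for `c ≥ 1`, every `G_u R` is at most `√(1 + η) ^ m * G_u Rmax`.
-/

open Finset

noncomputable section

namespace PaperStmt

/-- The hardcore tree-recursion map `F(R) = λ · ∏_u 1/(1 + R u)`. -/
def Fhc (lam : ℝ) {m : ℕ} (R : Fin m → ℝ) : ℝ :=
  lam * ∏ u : Fin m, 1 / (1 + R u)

/-- `G_u(R) = Φ(F(R)) · |∂F/∂R_u (R)| / Φ(R u)` for the potential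
`φ(x) = 2 log(√x + √(x+1))` with `Φ(x) = 1/√(x(x+1))`, expressed in the
`R`-variables. -/
def Ghc (lam : ℝ) {m : ℕ} (u : Fin m) (R : Fin m → ℝ) : ℝ :=
  Real.sqrt (R u * (1 + R u)) * (Fhc lam R / (1 + R u))
    / Real.sqrt (Fhc lam R * (1 + Fhc lam R))

/-- The probability `x / (1 + x)` of an event with odds `x`. For an occupation ratio `x` of the
hardcore model, this is the probability that the vertex is occupied. -/
def occupationProb (x : ℝ) : ℝ :=
  x / (1 + x)

theorem occupationProb_nonneg {x : ℝ} (hx : 0 ≤ x) : 0 ≤ occupationProb x :=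
  div_nonneg hx (by linarith)

theorem occupationProb_le_occupationProb {x y : ℝ} (hx : 0 ≤ x) (hxy : x ≤ y) :
    occupationProb x ≤ occupationProb y := by
  unfold occupationProb
  rw [div_le_div_iff₀ (by linarith) (by linarith)]
  linarith

theorem occupationProb_mul_le {c x : ℝ} (hc : 1 ≤ c) (hx : 0 ≤ x) :
    occupationProb (c * x) ≤ c * occupationProb x := by
  have hcx : x ≤ c * x := le_mul_of_one_le_left hx hc
  calc
    c * x / (1 + c * x) ≤ c * x / (1 + x) := by gcongr
    _ = c * (x / (1 + x)) := mul_div_assoc ..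

theorem sqrt_mul_div_right {x y : ℝ} (hx : 0 ≤ x) : √(x * y) / y = √(x / y) := by
  rw [Real.sqrt_mul hx, mul_div_assoc, Real.sqrt_div_self', mul_one_div, Real.sqrt_div hx]

theorem div_sqrt_mul_left {x y : ℝ} (hx : 0 ≤ x) : x / √(x * y) = √(x / y) := by
  rw [Real.sqrt_mul hx, ← div_div, Real.div_sqrt, Real.sqrt_div hx]

theorem sqrt_pow_eq_pow_sqrt {x : ℝ} (hx : 0 ≤ x) (n : ℕ) : √(x ^ n) = √x ^ n := by
  simpa using Real.sqrt_prod (range n) fun _ _ => hx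

theorem sqrt_one_add_pow_le {η : ℝ} (hη : 0 ≤ η) {m n : ℕ} (hmn : m ≤ n) :
    √(1 + η) ^ m ≤ (1 + 2 * η) ^ n := by
  have hsqrt : √(1 + η) ≤ 1 + 2 * η :=
    (Real.sqrt_one_add_le (by linarith)).trans (by linarith)
  calc
    √(1 + η) ^ m ≤ (1 + 2 * η) ^ m := by gcongr
    _ ≤ (1 + 2 * η) ^ n := pow_le_pow_right₀ (by linarith) hmn

section Recursion

variable {lam c : ℝ} {m : ℕ} {R S : Fin m → ℝ}

theorem Fhc_nonneg (hlam : 0 ≤ lam) (hR : ∀ w, 0 ≤ R w) : 0 ≤ Fhc lam R :=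
  mul_nonneg hlam <| prod_nonneg fun w _ => one_div_nonneg.2 <| by linarith [hR w]

theorem Fhc_le_pow_mul_Fhc (hlam : 0 ≤ lam) (hR : ∀ w, 0 ≤ R w) (hS : ∀ w, 0 ≤ S w)
    (hc : ∀ w, 1 + S w ≤ c * (1 + R w)) : Fhc lam R ≤ c ^ m * Fhc lam S := by
  have hfactor (w : Fin m) : 1 / (1 + R w) ≤ c * (1 / (1 + S w)) := by
    rw [mul_one_div, div_le_div_iff₀ (by linarith [hR w]) (by linarith [hS w]), one_mul]
    exact hc w
  calc
    lam * ∏ w, 1 / (1 + R w) ≤ lam * ∏ w, c * (1 / (1 + S w)) := by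
      gcongr with w
      · exact fun w _ => one_div_nonneg.2 <| by linarith [hR w]
      · exact hfactor w
    _ = c ^ m * (lam * ∏ w, 1 / (1 + S w)) := by
      rw [prod_mul_distrib, prod_const, card_univ, Fintype.card_fin, mul_left_comm]

theorem Ghc_eq_sqrt_occupationProb_mul (hlam : 0 ≤ lam) (hR : ∀ w, 0 ≤ R w) (u : Fin m) :
    Ghc lam u R = √(occupationProb (R u) * occupationProb (Fhc lam R)) := by
  have hF := Fhc_nonneg hlam hR
  calc
    Ghc lam u R = √(R u * (1 + R u)) / (1 + R u) *
        (Fhc lam R / √(Fhc lam R * (1 + Fhc lam R))) := by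
      unfold Ghc
      ring
    _ = √(occupationProb (R u)) * √(occupationProb (Fhc lam R)) := by
      rw [sqrt_mul_div_right (hR u), div_sqrt_mul_left hF, occupationProb, occupationProb]
    _ = √(occupationProb (R u) * occupationProb (Fhc lam R)) :=
      (Real.sqrt_mul (occupationProb_nonneg (hR u)) _).symm

theorem Ghc_nonneg (hlam : 0 ≤ lam) (hR : ∀ w, 0 ≤ R w) (u : Fin m) : 0 ≤ Ghc lam u R := by
  rw [Ghc_eq_sqrt_occupationProb_mul hlam hR]
  exact Real.sqrt_nonneg _

theorem Ghc_le_sqrt_pow_mul_Ghc (hlam : 0 ≤ lam) (hc1 : 1 ≤ c) (hR : ∀ w, 0 ≤ R w)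
    (hRS : ∀ w, R w ≤ S w) (hc : ∀ w, 1 + S w ≤ c * (1 + R w)) (u : Fin m) :
    Ghc lam u R ≤ √c ^ m * Ghc lam u S := by
  have hS (w : Fin m) : 0 ≤ S w := (hR w).trans (hRS w)
  have hc0 : 0 ≤ c := zero_le_one.trans hc1
  have hFR := Fhc_nonneg hlam hR
  have hFS := Fhc_nonneg hlam hS
  have hroot : occupationProb (Fhc lam R) ≤ c ^ m * occupationProb (Fhc lam S) :=
    (occupationProb_le_occupationProb hFR (Fhc_le_pow_mul_Fhc hlam hR hS hc)).trans
      (occupationProb_mul_le (one_le_pow₀ hc1) hFS)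
  have hchild : occupationProb (R u) ≤ occupationProb (S u) :=
    occupationProb_le_occupationProb (hR u) (hRS u)
  rw [Ghc_eq_sqrt_occupationProb_mul hlam hR, Ghc_eq_sqrt_occupationProb_mul hlam hS]
  calc
    √(occupationProb (R u) * occupationProb (Fhc lam R))
        ≤ √(occupationProb (S u) * (c ^ m * occupationProb (Fhc lam S))) :=
      Real.sqrt_le_sqrt <| mul_le_mul hchild hroot (occupationProb_nonneg hFR)
        (occupationProb_nonneg (hS u))
    _ = √c ^ m * √(occupationProb (S u) * occupationProb (Fhc lam S)) := by
      rw [mul_left_comm, Real.sqrt_mul (by positivity), sqrt_pow_eq_pow_sqrt hc0]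

theorem sSup_Ghc_le_sqrt_pow_mul_Ghc {Rmin Rmax : Fin m → ℝ} (hlam : 0 ≤ lam) (hc1 : 1 ≤ c)
    (hRmin : ∀ w, 0 ≤ Rmin w) (hRmax : ∀ w, Rmin w ≤ Rmax w)
    (hc : ∀ w, 1 + Rmax w ≤ c * (1 + Rmin w)) (u : Fin m) :
    sSup {x : ℝ | ∃ R : Fin m → ℝ, (∀ w, Rmin w ≤ R w ∧ R w ≤ Rmax w) ∧ x = Ghc lam u R}
      ≤ √c ^ m * Ghc lam u Rmax := by
  refine csSup_le ⟨_, Rmin, fun w => ⟨le_rfl, hRmax w⟩, rfl⟩ ?_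
  rintro _ ⟨R, hR, rfl⟩
  refine Ghc_le_sqrt_pow_mul_Ghc hlam hc1 (fun w => (hRmin w).trans (hR w).1)
    (fun w => (hR w).2) (fun w => (hc w).trans ?_) u
  gcongr
  exact (hR w).1

end Recursion

theorem statement17_general (m : ℕ) (lam : ℝ) (hlam : 0 < lam) (η : ℝ) (Rmin Rmax : Fin m → ℝ)
    (hR : ∀ u, 0 ≤ Rmin u ∧ Rmin u ≤ Rmax u ∧ Rmax u ≤ Rmin u + η) :
    (∑ u : Fin m, sSup {x : ℝ | ∃ R : Fin m → ℝ,
        (∀ w, Rmin w ≤ R w ∧ R w ≤ Rmax w) ∧ x = Ghc lam u R})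
      ≤ √(1 + η) ^ m * ∑ u : Fin m, Ghc lam u Rmax := by
  have hη (u : Fin m) : 0 ≤ η := by linarith [hR u]
  have hwidth (w : Fin m) : 1 + Rmax w ≤ (1 + η) * (1 + Rmin w) := by
    linarith [hR w, mul_nonneg (hη w) (hR w).1]
  rw [mul_sum]
  exact sum_le_sum fun u _ => sSup_Ghc_le_sqrt_pow_mul_Ghc hlam.le (by linarith [hη u])
    (fun w => (hR w).1) (fun w => (hR w).2.1) hwidth u

/-- If the boxes `[Rmin u, Rmax u]` have width at most
`η ≤ 1/2`, then the sum over `u` of the suprema of `G_u` over the box is at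
most `(1+2η)^(Δ+1)` times the sum of the values `G_u(Rmax)`. -/
theorem statement17 (Δ m : ℕ) (hΔ : 2 ≤ Δ) (hm : 1 ≤ m) (hmΔ : m ≤ Δ)
    (lam : ℝ) (hlam : 0 < lam) (η : ℝ) (hη0 : 0 < η) (hη : η ≤ 1 / 2)
    (Rmin Rmax : Fin m → ℝ)
    (hR : ∀ u, 0 ≤ Rmin u ∧ Rmin u ≤ Rmax u ∧ Rmax u ≤ Rmin u + η) :
    (∑ u : Fin m, sSup {x : ℝ | ∃ R : Fin m → ℝ,
        (∀ w, Rmin w ≤ R w ∧ R w ≤ Rmax w) ∧ x = Ghc lam u R})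
      ≤ (1 + 2 * η) ^ (Δ + 1) * ∑ u : Fin m, Ghc lam u Rmax := by
  have hG : 0 ≤ ∑ u, Ghc lam u Rmax :=
    sum_nonneg fun u _ => Ghc_nonneg hlam.le (fun w => (hR w).1.trans (hR w).2.1) u
  exact (statement17_general m lam hlam η Rmin Rmax hR).trans <|
    mul_le_mul_of_nonneg_right (sqrt_one_add_pow_le hη0.le (by lia)) hG

end PaperStmt
end
end

section
/- Let d ≥ 1 be an integer, λ > 0, and δ ∈ (0,1). Then: (1) for every R > 0 with λ = R·(1+R)^d (i.e. R is a positive fixed point of f_d(x) = λ/(1+x)^d), the inequality d·R/(1+R) ≤ 1−δ holds if and only if λ ≤ (d/(d−1+δ))^d · (1−δ)/(d−1+δ). (2) Moreover, if d ≥ 2, then setting λ_c = d^d/(d−1)^{d+1} and λ*(δ) = (d/(d−1+δ))^d · (1−δ)/(d−1+δ), one has (1 − δ − (d+1)·δ/(d−1+δ))·λ_c ≤ λ*(δ) ≤ (1−δ)·λ_c. -/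
/-!
A nonnegative fixed point `R` of `x ↦ λ / (1 + x) ^ d` determines `λ = R (1 + R) ^ d`, which is
strictly increasing in `R`. The bound `d R / (1 + R) ≤ 1 - δ` on the slope says that `R` is at most
`(1 - δ) / (d - 1 + δ)`, so it is equivalent to `λ` being at most its value `λ*(δ)` at that point.
Since `λ*(δ) = (1 - δ) ((d - 1) / (d - 1 + δ)) ^ (d + 1) λ_c`, the comparison with `λ_c` amounts to
`t ^ (d + 1) ≤ 1` for `t ≤ 1` from above and to Bernoulli's inequality from below.
-/

/-- The fugacity `λ` for which `R` is a fixed point of the hardcore tree recursion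
`x ↦ λ / (1 + x) ^ d`, with a real branching parameter `d`. -/
noncomputable def fixedPointFugacity (d R : ℝ) : ℝ :=
  R * (1 + R) ^ d

/-- The uniqueness threshold `λ_c` of the hardcore model on the tree with branching parameter `d`;
it is meaningful for `1 < d`. -/
noncomputable def criticalFugacity (d : ℝ) : ℝ :=
  d ^ d / (d - 1) ^ (d + 1)

/-- The threshold `λ*(δ)`, the fugacity at which the hardcore tree recursion with branching
parameter `d` has slope of absolute value `1 - δ` at its fixed point; it is meaningful for
`0 < d - 1 + δ`. -/
noncomputable def contractionFugacity (d δ : ℝ) : ℝ :=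
  (d / (d - 1 + δ)) ^ d * ((1 - δ) / (d - 1 + δ))

lemma strictMonoOn_fixedPointFugacity {d : ℝ} (hd : 0 ≤ d) :
    StrictMonoOn (fixedPointFugacity d) (Set.Ici 0) := by
  intro x (hx : 0 ≤ x) y _ hxy
  have hpow : (1 + x) ^ d ≤ (1 + y) ^ d := by gcongr
  have hpos : 0 < (1 + x) ^ d := by positivity
  exact mul_lt_mul hxy hpow hpos (hx.trans hxy.le)

lemma mul_div_one_add_le_one_sub_iff {d δ R : ℝ} (hc : 0 < d - 1 + δ) (hR : 0 < 1 + R) :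
    d * R / (1 + R) ≤ 1 - δ ↔ R ≤ (1 - δ) / (d - 1 + δ) := by
  rw [div_le_iff₀ hR, le_div_iff₀ hc]
  constructor <;> intro h <;> linarith

lemma fixedPointFugacity_one_sub_div {d δ : ℝ} (hc : d - 1 + δ ≠ 0) :
    fixedPointFugacity d ((1 - δ) / (d - 1 + δ)) = contractionFugacity d δ := by
  have hbase : 1 + (1 - δ) / (d - 1 + δ) = d / (d - 1 + δ) := by
    field_simp
    ring
  rw [fixedPointFugacity, contractionFugacity, hbase, mul_comm]

theorem mul_div_one_add_le_iff_fixedPointFugacity_le {d δ R : ℝ} (hc : 0 < d - 1 + δ)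
    (hδ : δ ≤ 1) (hR : 0 ≤ R) :
    d * R / (1 + R) ≤ 1 - δ ↔ fixedPointFugacity d R ≤ contractionFugacity d δ := by
  have hd : 0 ≤ d := by linarith
  have hR₀ : 0 ≤ (1 - δ) / (d - 1 + δ) := div_nonneg (sub_nonneg.2 hδ) hc.le
  rw [mul_div_one_add_le_one_sub_iff hc (by positivity), ← fixedPointFugacity_one_sub_div hc.ne']
  exact ((strictMonoOn_fixedPointFugacity hd).le_iff_le hR hR₀).symm

lemma criticalFugacity_nonneg {d : ℝ} (hd : 1 ≤ d) : 0 ≤ criticalFugacity d :=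
  div_nonneg (Real.rpow_nonneg (by linarith) _) (Real.rpow_nonneg (sub_nonneg.2 hd) _)

lemma contractionFugacity_eq_mul_criticalFugacity {d δ : ℝ} (hd : 1 < d) (hc : 0 < d - 1 + δ) :
    contractionFugacity d δ =
      (1 - δ) * ((d - 1) / (d - 1 + δ)) ^ (d + 1) * criticalFugacity d := by
  have hd₁ : 0 < d - 1 := sub_pos.2 hd
  have hd₀ : 0 ≤ d := by linarith
  rw [contractionFugacity, criticalFugacity, Real.div_rpow hd₀ hc.le, Real.div_rpow hd₁.le hc.le,
    Real.rpow_add_one hc.ne']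
  field_simp

lemma one_sub_mul_div_add_le_div_add_rpow {a δ p : ℝ} (ha : 0 ≤ a) (hc : 0 < a + δ)
    (hp : 1 ≤ p) : 1 - p * δ / (a + δ) ≤ (a / (a + δ)) ^ p := by
  have hratio : δ / (a + δ) ≤ 1 := (div_le_one hc).2 (by linarith)
  have hbase : 1 + -(δ / (a + δ)) = a / (a + δ) := by
    field_simp
    ring
  calc 1 - p * δ / (a + δ) = 1 + p * -(δ / (a + δ)) := by ring
    _ ≤ (1 + -(δ / (a + δ))) ^ p := one_add_mul_self_le_rpow_one_add (neg_le_neg hratio) hp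
    _ = (a / (a + δ)) ^ p := by rw [hbase]

theorem mul_criticalFugacity_le_contractionFugacity {d δ : ℝ} (hd : 1 < d)
    (hc : 0 < d - 1 + δ) (hδ : δ ≤ 1) :
    (1 - δ - (d + 1) * δ / (d - 1 + δ)) * criticalFugacity d ≤ contractionFugacity d δ := by
  have hd₁ : 0 ≤ d - 1 := sub_nonneg.2 hd.le
  have hsq : 0 ≤ (d + 1) * δ ^ 2 / (d - 1 + δ) :=
    div_nonneg (mul_nonneg (by linarith) (sq_nonneg δ)) hc.le
  rw [contractionFugacity_eq_mul_criticalFugacity hd hc]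
  refine mul_le_mul_of_nonneg_right ?_ (criticalFugacity_nonneg hd.le)
  calc 1 - δ - (d + 1) * δ / (d - 1 + δ)
      ≤ 1 - δ - (d + 1) * δ / (d - 1 + δ) + (d + 1) * δ ^ 2 / (d - 1 + δ) :=
        le_add_of_nonneg_right hsq
    _ = (1 - δ) * (1 - (d + 1) * δ / (d - 1 + δ)) := by ring
    _ ≤ (1 - δ) * ((d - 1) / (d - 1 + δ)) ^ (d + 1) :=
        mul_le_mul_of_nonneg_left
          (one_sub_mul_div_add_le_div_add_rpow hd₁ hc (by linarith)) (sub_nonneg.2 hδ)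

theorem contractionFugacity_le_mul_criticalFugacity {d δ : ℝ} (hd : 1 < d) (hδ₀ : 0 ≤ δ)
    (hδ₁ : δ ≤ 1) : contractionFugacity d δ ≤ (1 - δ) * criticalFugacity d := by
  have hd₁ : 0 < d - 1 := sub_pos.2 hd
  have hc : 0 < d - 1 + δ := by positivity
  have hratio : (d - 1) / (d - 1 + δ) ≤ 1 := (div_le_one hc).2 (le_add_of_nonneg_right hδ₀)
  have hpow : ((d - 1) / (d - 1 + δ)) ^ (d + 1) ≤ 1 :=
    Real.rpow_le_one (div_nonneg hd₁.le hc.le) hratio (by linarith)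
  rw [contractionFugacity_eq_mul_criticalFugacity hd hc]
  exact mul_le_mul_of_nonneg_right (mul_le_of_le_one_right (sub_nonneg.2 hδ₁) hpow)
    (criticalFugacity_nonneg hd.le)

theorem statement18_general {d δ : ℝ} (hc : 0 < d - 1 + δ) (hδ : δ ≤ 1) :
    (∀ R : ℝ, 0 ≤ R →
      (d * R / (1 + R) ≤ 1 - δ ↔ fixedPointFugacity d R ≤ contractionFugacity d δ))
    ∧ (1 < d →
        (1 - δ - (d + 1) * δ / (d - 1 + δ)) * criticalFugacity d ≤ contractionFugacity d δ
        ∧ (0 ≤ δ → contractionFugacity d δ ≤ (1 - δ) * criticalFugacity d)) :=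
  ⟨fun _ hR => mul_div_one_add_le_iff_fixedPointFugacity_le hc hδ hR, fun hd =>
    ⟨mul_criticalFugacity_le_contractionFugacity hd hc hδ, fun hδ₀ =>
      contractionFugacity_le_mul_criticalFugacity hd hδ₀ hδ⟩⟩

/-- (1) At any positive fixed point `R` of the hardcore
univariate tree recursion `f_d(x) = λ/(1+x)^d` (i.e. `λ = R(1+R)^d`), one has
`d·R/(1+R) ≤ 1-δ` iff `λ ≤ (d/(d-1+δ))^d · (1-δ)/(d-1+δ)`.
(2) Moreover, for `d ≥ 2`, with `λ_c = d^d/(d-1)^(d+1)` and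
`λ*(δ) = (d/(d-1+δ))^d · (1-δ)/(d-1+δ)`, one has
`(1 - δ - (d+1)δ/(d-1+δ))·λ_c ≤ λ*(δ) ≤ (1-δ)·λ_c`. -/
theorem statement18 (d : ℕ) (hd : 1 ≤ d) (lam : ℝ) (hlam : 0 < lam)
    (δ : ℝ) (hδ0 : 0 < δ) (hδ1 : δ < 1) :
    (∀ R : ℝ, 0 < R → lam = R * (1 + R) ^ d →
      ((d : ℝ) * R / (1 + R) ≤ 1 - δ ↔
        lam ≤ ((d : ℝ) / ((d : ℝ) - 1 + δ)) ^ d * ((1 - δ) / ((d : ℝ) - 1 + δ))))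
    ∧ (2 ≤ d →
        (1 - δ - ((d : ℝ) + 1) * δ / ((d : ℝ) - 1 + δ))
            * ((d : ℝ) ^ d / ((d : ℝ) - 1) ^ (d + 1))
          ≤ ((d : ℝ) / ((d : ℝ) - 1 + δ)) ^ d * ((1 - δ) / ((d : ℝ) - 1 + δ))
        ∧ ((d : ℝ) / ((d : ℝ) - 1 + δ)) ^ d * ((1 - δ) / ((d : ℝ) - 1 + δ))
            ≤ (1 - δ) * ((d : ℝ) ^ d / ((d : ℝ) - 1) ^ (d + 1))) := by
  have hd' : (1 : ℝ) ≤ d := by exact_mod_cast hd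
  obtain ⟨hslope, hcomp⟩ := statement18_general (d := d) (δ := δ) (by linarith) hδ1.le
  simp only [fixedPointFugacity, contractionFugacity, criticalFugacity, ← Nat.cast_add_one,
    Real.rpow_natCast] at hslope hcomp ⊢
  exact ⟨fun R hR hfix => hfix ▸ hslope R hR.le, fun hd₂ =>
    (hcomp (by exact_mod_cast hd₂)).imp_right fun hupper => hupper hδ0.le⟩
end

section
/- Let u, v, w be distinct vertices of T such that w lies on the (unique) path from u to v, and assume 0 < Pr[σ(u)=0] < 1 and 0 < Pr[σ(w)=0] < 1. Then Ψ(u,v) = Ψ(u,w) · Ψ(w,v). -/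
/-!
If every walk from `u` to `v` meets `w`, the graph is the union of two sides that contain `u` and
`v` respectively and share only `w`. Exchanging one side between two configurations that agree at
`w` preserves the product of their weights, so the spins on the two sides are independent given the
spin at `w`. Hence `Pr[σ v = 0 | σ u = a]` is the sum over `c` of
`Pr[σ v = 0 | σ w = c] * Pr[σ w = c | σ u = a]`, and the factors `Pr[σ w = c | σ u = a]` sum to `1`
over `c`. Subtracting the cases `a = 0` and `a = 1` gives the product formula.
-/

open scoped Classical
open Finset

noncomputable section

namespace PaperStmt

variable {V : Type*} [Fintype V]

/-- The number of edges of `T` whose two endpoints both have spin `s`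
(`false` = spin 0, `true` = spin 1). -/
def mcount (T : SimpleGraph V) (σ : V → Bool) (s : Bool) : ℕ :=
  (Finset.univ.filter fun e : Sym2 V => e ∈ T.edgeSet ∧ ∀ v ∈ e, σ v = s).card

/-- The two-state spin system weight
`w(σ) = β^{m₀(σ)} · γ^{m₁(σ)} · λ^{|σ⁻¹(0)|}`. -/
def spinWeight (T : SimpleGraph V) (β γ lam : ℝ) (σ : V → Bool) : ℝ :=
  β ^ mcount T σ false * γ ^ mcount T σ true
    * lam ^ (Finset.univ.filter fun v => σ v = false).card

/-- Unnormalized probability of an event under the spin system. -/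
def spinPr (T : SimpleGraph V) (β γ lam : ℝ) (E : (V → Bool) → Prop) : ℝ :=
  ∑ σ : V → Bool, if E σ then spinWeight T β γ lam σ else 0

/-- Conditional probability `Pr[E | F]` under the spin system. -/
def spinCondPr (T : SimpleGraph V) (β γ lam : ℝ)
    (E F : (V → Bool) → Prop) : ℝ :=
  spinPr T β γ lam (fun σ => E σ ∧ F σ) / spinPr T β γ lam F

/-- The pairwise influence
`Ψ(x,y) = Pr[σ y = 0 | σ x = 0] − Pr[σ y = 0 | σ x = 1]`. -/
def spinPsi (T : SimpleGraph V) (β γ lam : ℝ) (x y : V) : ℝ :=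
  spinCondPr T β γ lam (fun σ => σ y = false) (fun σ => σ x = false)
    - spinCondPr T β γ lam (fun σ => σ y = false) (fun σ => σ x = true)

section Separation

variable {α : Type*} {G : SimpleGraph α} {u v w : α}

/-- A separation `(A, B)` of a graph, with separator `A ∩ B`. The absence of edges between `A \ B`
and `B \ A` is encoded by requiring every edge to lie within one of the two sides. -/
structure IsSeparation (G : SimpleGraph α) (A B : Set α) : Prop where
  union_eq_univ : A ∪ B = Set.univ
  edge_subset : ∀ e ∈ G.edgeSet, (e : Set α) ⊆ A ∨ (e : Set α) ⊆ B

theorem exists_isSeparation_inter_eq_singleton (h : ∀ p : G.Walk u v, w ∈ p.support) :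
    ∃ A B, IsSeparation G A B ∧ A ∩ B = {w} ∧ u ∈ A ∧ v ∈ B := by
  let C : Set α := {x | ∃ p : G.Walk u x, w ∉ p.support}
  have hwC : w ∉ C := fun ⟨p, hp⟩ => hp p.end_mem_support
  have huC : u ∈ insert w C := by
    by_cases huw : u = w
    · exact .inl huw
    · exact .inr ⟨.nil, by simpa using Ne.symm huw⟩
  have hvC : v ∉ C := fun ⟨p, hp⟩ => hp (h p)
  have adj_closed {x y : α} (hxy : G.Adj x y) (hx : x ∈ C) : y ∈ insert w C := by
    obtain ⟨p, hp⟩ := hx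
    by_cases hyw : y = w
    · exact .inl hyw
    · exact .inr ⟨p.concat hxy, by simp [hp, Ne.symm hyw]⟩
  refine ⟨insert w C, Cᶜ, ⟨?_, ?_⟩, ?_, huC, hvC⟩
  · rw [Set.insert_union, Set.union_compl_self, Set.insert_eq_of_mem (Set.mem_univ w)]
  · rintro ⟨x, y⟩ (hxy : G.Adj x y)
    by_cases hx : x ∈ C
    · exact .inl (by simp [Set.insert_subset_iff, hx, adj_closed hxy hx])
    · by_cases hy : y ∈ C
      · exact .inl (by simp [Set.insert_subset_iff, hy, adj_closed hxy.symm hy])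
      · exact .inr (by simp [Set.insert_subset_iff, hx, hy])
  · rw [Set.insert_inter_of_mem hwC, Set.inter_compl_self, insert_empty_eq]

theorem mem_support_of_dist_eq_add (hG : G.IsAcyclic) (huw : G.Reachable u w)
    (hwv : G.Reachable w v) (hdist : G.dist u v = G.dist u w + G.dist w v) (p : G.Walk u v) :
    w ∈ p.support := by
  obtain ⟨q, hq⟩ := huw.exists_walk_length_eq_dist
  obtain ⟨r, hr⟩ := hwv.exists_walk_length_eq_dist
  have hpath : (q.append r).IsPath :=
    SimpleGraph.Walk.isPath_of_length_eq_dist _ <| by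
      rw [SimpleGraph.Walk.length_append, hq, hr, hdist]
  have heq : q.append r = p.bypass :=
    congrArg Subtype.val ((hG.subsingleton_path u v).elim ⟨_, hpath⟩ ⟨_, p.bypass_isPath⟩)
  exact p.support_bypass_subset_support (heq ▸ by simp)

end Separation

section Exchange

variable {ι β : Type*} {A B : Set ι} {σ τ : ι → β}

theorem dependsOn_apply_eq {i : ι} (hi : i ∈ A) (b : β) :
    DependsOn (fun σ : ι → β => σ i = b) A :=
  fun _ _ h => congrArg (· = b) (h i hi)

theorem piecewise_eqOn_of_eqOn_inter (h : Set.EqOn σ τ (A ∩ B)) :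
    Set.EqOn (A.piecewise σ τ) τ B :=
  (Set.eqOn_piecewise A).mpr ⟨Set.inter_comm A B ▸ h, fun _ _ => rfl⟩

theorem piecewise_add_piecewise_swap {M : Type*} [AddCommMagma M] {f : (ι → β) → M}
    (hf : DependsOn f A ∨ DependsOn f B) (h : Set.EqOn σ τ (A ∩ B)) :
    f (A.piecewise σ τ) + f (A.piecewise τ σ) = f σ + f τ := by
  rcases hf with hA | hB
  · rw [hA (A.piecewise_eqOn σ τ), hA (A.piecewise_eqOn τ σ)]
  · rw [hB (piecewise_eqOn_of_eqOn_inter h), hB (piecewise_eqOn_of_eqOn_inter h.symm), add_comm]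

theorem card_filter_piecewise_add_swap {κ : Type*} [Fintype κ] {P : κ → (ι → β) → Prop}
    [∀ k σ, Decidable (P k σ)] (hP : ∀ k, DependsOn (P k) A ∨ DependsOn (P k) B)
    (h : Set.EqOn σ τ (A ∩ B)) :
    #{k | P k (A.piecewise σ τ)} + #{k | P k (A.piecewise τ σ)}
      = #{k | P k σ} + #{k | P k τ} := by
  simp only [card_filter, ← sum_add_distrib]
  refine sum_congr rfl fun k _ => piecewise_add_piecewise_swap (f := fun σ => ite (P k σ) 1 0) ?_ h
  have dependsOn_indicator {S : Set ι} (hk : DependsOn (P k) S) :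
      DependsOn (fun σ => ite (P k σ) 1 0) S := fun _ _ hx => by simp only [hk hx]
  exact (hP k).imp dependsOn_indicator dependsOn_indicator

theorem involutive_piecewise_swap (A : Set ι) :
    Function.Involutive fun p : (ι → β) × (ι → β) =>
      (A.piecewise p.1 p.2, A.piecewise p.2 p.1) := by
  rintro ⟨σ, τ⟩
  ext i <;> by_cases hi : i ∈ A <;> simp [hi]

end Exchange

section Markov

variable {G : SimpleGraph V} {β γ lam : ℝ} {A B : Set V} {u v w : V}

theorem mcount_piecewise_add_swap (hAB : IsSeparation G A B) {σ τ : V → Bool}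
    (h : Set.EqOn σ τ (A ∩ B)) (s : Bool) :
    mcount G (A.piecewise σ τ) s + mcount G (A.piecewise τ σ) s = mcount G σ s + mcount G τ s := by
  refine card_filter_piecewise_add_swap
    (P := fun (e : Sym2 V) σ => e ∈ G.edgeSet ∧ ∀ x ∈ e, σ x = s) (fun e => ?_) h
  have dependsOn_edge : DependsOn (fun σ : V → Bool => ∀ x ∈ e, σ x = s) (e : Set V) :=
    fun _ _ hx => propext <| forall₂_congr fun x hxe => by rw [hx x hxe]
  by_cases he : e ∈ G.edgeSet
  · simpa only [he, true_and] using
      (hAB.edge_subset e he).imp dependsOn_edge.mono dependsOn_edge.mono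
  · exact .inl fun _ _ _ => by simp only [he, false_and]

theorem spinWeight_piecewise_mul_swap (hAB : IsSeparation G A B) {σ τ : V → Bool}
    (h : Set.EqOn σ τ (A ∩ B)) :
    spinWeight G β γ lam (A.piecewise σ τ) * spinWeight G β γ lam (A.piecewise τ σ)
      = spinWeight G β γ lam σ * spinWeight G β γ lam τ := by
  have collect_powers (a b c a' b' c' : ℕ) :
      β ^ a * γ ^ b * lam ^ c * (β ^ a' * γ ^ b' * lam ^ c')
        = β ^ (a + a') * γ ^ (b + b') * lam ^ (c + c') := by ring
  have card_zeros := card_filter_piecewise_add_swap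
    (P := fun (x : V) (σ : V → Bool) => σ x = false)
    (fun x => (hAB.union_eq_univ.ge (Set.mem_univ x)).imp
      (dependsOn_apply_eq · false) (dependsOn_apply_eq · false)) h
  simp only [spinWeight, collect_powers, mcount_piecewise_add_swap hAB h, card_zeros]

theorem spinPr_spatial_markov (hAB : IsSeparation G A B) {E F : (V → Bool) → Prop}
    (hE : DependsOn E A) (hF : DependsOn F B) (ρ : V → Bool) :
    spinPr G β γ lam (fun σ => (F σ ∧ E σ) ∧ Set.EqOn σ ρ (A ∩ B))
        * spinPr G β γ lam (fun σ => Set.EqOn σ ρ (A ∩ B))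
      = spinPr G β γ lam (fun σ => E σ ∧ Set.EqOn σ ρ (A ∩ B))
        * spinPr G β γ lam (fun σ => F σ ∧ Set.EqOn σ ρ (A ∩ B)) := by
  simp only [spinPr, sum_mul_sum, ← sum_product', univ_product_univ]
  refine Fintype.sum_equiv (involutive_piecewise_swap A).toPerm _ _ fun ⟨σ, τ⟩ => ?_
  have hsep (σ τ : V → Bool) :
      Set.EqOn (A.piecewise σ τ) ρ (A ∩ B) ↔ Set.EqOn σ ρ (A ∩ B) := by
    have heq := (A.piecewise_eqOn σ τ).mono (Set.inter_subset_left (t := B))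
    exact ⟨heq.symm.trans, heq.trans⟩
  simp only [Function.Involutive.coe_toPerm, hsep]
  by_cases h : Set.EqOn σ ρ (A ∩ B) ∧ Set.EqOn τ ρ (A ∩ B)
  · have hστ : Set.EqOn σ τ (A ∩ B) := h.1.trans h.2.symm
    rw [hE (A.piecewise_eqOn σ τ), hF (piecewise_eqOn_of_eqOn_inter hστ.symm)]
    simp only [h, and_true, if_true, ite_and, ite_mul, mul_ite, zero_mul, mul_zero,
      spinWeight_piecewise_mul_swap hAB hστ]
  · rcases not_and_or.mp h with h | h <;> simp [h]

theorem spinPr_and_and_eq_spinCondPr_mul (hAB : IsSeparation G A B) (hinter : A ∩ B = {w})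
    {E F : (V → Bool) → Prop} (hE : DependsOn E A) (hF : DependsOn F B) {c : Bool}
    (hc : spinPr G β γ lam (fun σ => σ w = c) ≠ 0) :
    spinPr G β γ lam (fun σ => (F σ ∧ E σ) ∧ σ w = c)
      = spinCondPr G β γ lam F (fun σ => σ w = c)
        * spinPr G β γ lam (fun σ => E σ ∧ σ w = c) := by
  have markov := spinPr_spatial_markov (β := β) (γ := γ) (lam := lam)
    hAB hE hF (fun _ => c)
  simp only [hinter, Set.eqOn_singleton] at markov
  rw [spinCondPr, div_mul_eq_mul_div, eq_div_iff hc, markov, mul_comm]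

theorem spinPr_eq_sum_and_apply_eq (E : (V → Bool) → Prop) (x : V) :
    spinPr G β γ lam E = ∑ c, spinPr G β γ lam (fun σ => E σ ∧ σ x = c) := by
  simp only [spinPr]
  rw [sum_comm]
  refine sum_congr rfl fun σ _ => ?_
  simp only [and_comm (a := E σ), ite_and, sum_ite_eq, mem_univ, if_true]

theorem sum_spinCondPr_apply_eq {E : (V → Bool) → Prop} (hE : spinPr G β γ lam E ≠ 0) (x : V) :
    ∑ c, spinCondPr G β γ lam (fun σ => σ x = c) E = 1 := by
  simp only [spinCondPr, ← sum_div, and_comm (b := E _), ← spinPr_eq_sum_and_apply_eq, div_self hE]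

theorem spinCondPr_eq_sum_mul_of_isSeparation (hAB : IsSeparation G A B) (hinter : A ∩ B = {w})
    {E F : (V → Bool) → Prop} (hE : DependsOn E A) (hF : DependsOn F B)
    (hw : ∀ c, spinPr G β γ lam (fun σ => σ w = c) ≠ 0) :
    spinCondPr G β γ lam F E
      = ∑ c, spinCondPr G β γ lam F (fun σ => σ w = c)
          * spinCondPr G β γ lam (fun σ => σ w = c) E := by
  rw [spinCondPr, spinPr_eq_sum_and_apply_eq _ w, sum_div]
  refine sum_congr rfl fun c _ => ?_
  rw [spinPr_and_and_eq_spinCondPr_mul hAB hinter hE hF (hw c), mul_div_assoc]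
  simp only [spinCondPr, and_comm]

theorem spinPr_apply_eq_ne_zero {x : V}
    (h0 : spinPr G β γ lam (fun σ => σ x = false) / spinPr G β γ lam (fun _ => True) ≠ 0)
    (h1 : spinPr G β γ lam (fun σ => σ x = false) / spinPr G β γ lam (fun _ => True) ≠ 1)
    (c : Bool) : spinPr G β γ lam (fun σ => σ x = c) ≠ 0 := by
  obtain ⟨hfalse, hZ⟩ := div_ne_zero_iff.mp h0
  have total := spinPr_eq_sum_and_apply_eq (G := G) (β := β) (γ := γ) (lam := lam)
    (fun _ => True) x
  simp only [true_and, Fintype.sum_bool] at total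
  cases c with
  | false => exact hfalse
  | true =>
    intro htrue
    rw [htrue, zero_add] at total
    exact h1 (total ▸ div_self hZ)

theorem statement19_general (hsep : ∀ p : G.Walk u v, w ∈ p.support)
    (hu : ∀ c, spinPr G β γ lam (fun σ => σ u = c) ≠ 0)
    (hw : ∀ c, spinPr G β γ lam (fun σ => σ w = c) ≠ 0) :
    spinPsi G β γ lam u v = spinPsi G β γ lam u w * spinPsi G β γ lam w v := by
  obtain ⟨A, B, hAB, hinter, huA, hvB⟩ := exists_isSeparation_inter_eq_singleton hsep
  have chain (a : Bool) :
      spinCondPr G β γ lam (fun σ => σ v = false) (fun σ => σ u = a)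
        = ∑ c, spinCondPr G β γ lam (fun σ => σ v = false) (fun σ => σ w = c)
            * spinCondPr G β γ lam (fun σ => σ w = c) (fun σ => σ u = a) :=
    spinCondPr_eq_sum_mul_of_isSeparation hAB hinter
      (dependsOn_apply_eq huA a) (dependsOn_apply_eq hvB false) hw
  have total (a : Bool) :
      ∑ c, spinCondPr G β γ lam (fun σ => σ w = c) (fun σ => σ u = a) = 1 :=
    sum_spinCondPr_apply_eq (hu a) w
  simp only [Fintype.sum_bool] at chain total
  simp only [spinPsi, chain, eq_sub_of_add_eq (total _)]
  ring

end Markov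

/-- For a two-state spin system on a tree, if `w` lies on the
path from `u` to `v` (all distinct) and the spins of `u` and `w` are
nondegenerate, then `Ψ(u,v) = Ψ(u,w) · Ψ(w,v)`. -/
theorem statement19 (V : Type) [Fintype V] (T : SimpleGraph V) (hT : T.IsTree)
    (β γ lam : ℝ) (hβ : 0 ≤ β) (hγ : 0 ≤ γ) (hlam : 0 ≤ lam)
    (hZ : 0 < spinPr T β γ lam (fun _ => True))
    (u v w : V) (huv : u ≠ v) (huw : u ≠ w) (hvw : v ≠ w)
    (hpath : T.dist u v = T.dist u w + T.dist w v)
    (hu0 : 0 < spinPr T β γ lam (fun σ => σ u = false)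
              / spinPr T β γ lam (fun _ => True))
    (hu1 : spinPr T β γ lam (fun σ => σ u = false)
              / spinPr T β γ lam (fun _ => True) < 1)
    (hw0 : 0 < spinPr T β γ lam (fun σ => σ w = false)
              / spinPr T β γ lam (fun _ => True))
    (hw1 : spinPr T β γ lam (fun σ => σ w = false)
              / spinPr T β γ lam (fun _ => True) < 1) :
    spinPsi T β γ lam u v = spinPsi T β γ lam u w * spinPsi T β γ lam w v :=
  statement19_general
    (mem_support_of_dist_eq_add hT.isAcyclic (hT.connected u w) (hT.connected w v) hpath)
    (spinPr_apply_eq_ne_zero hu0.ne' hu1.ne) (spinPr_apply_eq_ne_zero hw0.ne' hw1.ne)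

end PaperStmt
end
end
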